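/- arXiv:0910.3913 — 4 statements merged into one kernel-verified Lean document; each statement's English description precedes it below -/
import Mathlib

section
/- Let φ be a satisfiable set of assignments over a finite type V of propositional variables. Then the set Υ_φ of all variables dispensable w.r.t. φ equals the intersection of all maximal deselectable sets of variables of φ. -/
/-- A set of variables `X` is deselectable w.r.t. `φ` if some model of `φ`
assigns `false` to every variable in `X`. -/
def Deselectable {V : Type*} (φ : Set (V → Bool)) (X : Set V) : Prop :=
  ∃ α ∈ φ, ∀ v ∈ X, α v = false

/-- A variable `v` is dispensable w.r.t. `φ` if every deselectable set stays
deselectable after adding `v`. -/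
def Dispensable {V : Type*} (φ : Set (V → Bool)) (v : V) : Prop :=
  ∀ X : Set V, Deselectable φ X → Deselectable φ (X ∪ {v})

/-- A deselectable set `M` is maximal if no deselectable set strictly contains it. -/
def MaximalDeselectable {V : Type*} (φ : Set (V → Bool)) (M : Set V) : Prop :=
  Deselectable φ M ∧ ¬ ∃ M' : Set V, Deselectable φ M' ∧ M ⊂ M'

theorem dispensables_eq_sInter_maximal_deselectable
    {V : Type*} [Finite V] (φ : Set (V → Bool)) (hsat : φ.Nonempty) :
    {v | Dispensable φ v} = ⋂₀ {M : Set V | MaximalDeselectable φ M} := by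
  ext v
  constructor
  · intro hv M hM
    by_contra hvM
    refine hM.2 ⟨M ∪ {v}, hv M hM.1, Set.subset_union_left, fun h => hvM (h (Or.inr rfl))⟩
  · intro hv X hX
    obtain ⟨M, hXM, hM⟩ :=
      (Set.toFinite {Y : Set V | Deselectable φ Y}).exists_le_maximal hX
    have hvM : v ∈ M := hv M ⟨hM.prop, fun ⟨M', hM', hlt⟩ => hlt.2 (hM.le_of_ge hM' hlt.1)⟩
    obtain ⟨α, hα, h⟩ := hM.prop
    refine ⟨α, hα, fun w hw => h w ?_⟩
    rcases hw with hw | rfl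
    · exact hXM hw
    · exact hvM
end

section
/- Let φ be a set of assignments over a finite type V of propositional variables and v ∈ V. Then v is dispensable w.r.t. φ if and only if v is assigned false in every minimal model of φ. -/
/-- A model `α` of `φ` is minimal if no model of `φ` has a strictly smaller
true-set. -/
def MinimalModel {V : Type*} (φ : Set (V → Bool)) (α : V → Bool) : Prop :=
  α ∈ φ ∧ ¬ ∃ α' ∈ φ, {w | α' w = true} ⊂ {w | α w = true}

theorem dispensable_iff_false_in_all_minimal_models
    {V : Type*} [Finite V] (φ : Set (V → Bool)) (v : V) :
    Dispensable φ v ↔ ∀ α : V → Bool, MinimalModel φ α → α v = false := by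
  constructor
  · intro h α hα
    by_contra hv
    obtain ⟨β, hβ, hX⟩ := h {w | α w = false} ⟨α, hα.1, fun w hw => hw⟩
    refine hα.2 ⟨β, hβ, ?_, ?_⟩
    · intro w hw
      by_contra hw'
      have h1 : α w = false := by simpa using hw'
      have h2 := hX w (Or.inl h1)
      simp_all
    · intro hs
      have h1 : β v = true := hs (by simpa using hv)
      have h2 := hX v (Or.inr rfl)
      simp_all
  · rintro h X ⟨α, hα, hX⟩
    have wf : WellFounded (fun a b : V → Bool => {w | a w = true} ⊂ {w | b w = true}) :=
      InvImage.wf (fun a : V → Bool => {w | a w = true})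
        (wellFounded_lt : WellFounded (fun a b : Set V => a < b))
    obtain ⟨β, ⟨hβ, hβX⟩, hmin⟩ :=
      wf.has_min {a | a ∈ φ ∧ ∀ w ∈ X, a w = false} ⟨α, hα, hX⟩
    refine ⟨β, hβ, ?_⟩
    have hv : β v = false := by
      refine h β ⟨hβ, ?_⟩
      rintro ⟨γ, hγ, hlt⟩
      refine hmin γ ⟨hγ, fun w hw => ?_⟩ hlt
      by_contra hw'
      have h1 : β w = true := hlt.1 (by simpa using hw')
      have h2 := hβX w hw
      simp_all
    rintro w (hw | hw)
    · exact hβX w hw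
    · rw [Set.mem_singleton_iff.mp hw]
      exact hv
end

section
/- Let φ be a set of assignments over a finite type V of propositional variables, regarded as an Ordered Solution Domain with all domains equal to Bool and the preference order given by inclusion of true-sets (α' ⪯ α iff {w : α' w = true} ⊆ {w : α w = true}), so that optimal solutions are exactly the minimal models of φ. Then a variable v is settled if and only if v is dispensable w.r.t. φ or v is assigned true in every model of φ. -/
/-- A variable `v` is settled if some Boolean value is assigned to `v` by every
minimal model of `φ`. -/
def SettledVar {V : Type*} (φ : Set (V → Bool)) (v : V) : Prop :=
  ∃ b : Bool, ∀ α : V → Bool, MinimalModel φ α → α v = b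

theorem exists_minimalModel_le {V : Type*} [Finite V] (φ : Set (V → Bool))
    (α : V → Bool) (hα : α ∈ φ) :
    ∃ m, MinimalModel φ m ∧ ∀ w, α w = false → m w = false := by
  obtain ⟨m, hle, hm⟩ := (Set.toFinite φ).exists_le_minimal hα
  refine ⟨m, ⟨hm.prop, ?_⟩, ?_⟩
  · rintro ⟨β, hβ, hss⟩
    have hβm : β ≤ m := fun w hw => hss.1 hw
    have hmβ : m ≤ β := hm.le_of_le hβ hβm
    exact hss.2 (fun w hw => hmβ w hw)
  · intro w hw
    have h := hle w
    rw [hw] at h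
    exact le_bot_iff.1 h

theorem settled_iff_dispensable_or_always_true
    {V : Type*} [Finite V] (φ : Set (V → Bool)) (v : V) :
    SettledVar φ v ↔ Dispensable φ v ∨ ∀ α ∈ φ, α v = true := by
  constructor
  · rintro ⟨b, hb⟩
    cases b with
    | true =>
      right
      intro α hα
      obtain ⟨m, hm, hle⟩ := exists_minimalModel_le φ α hα
      by_contra h
      have h1 := hle v (by simpa using h)
      rw [hb m hm] at h1
      cases h1
    | false =>
      left
      rintro X ⟨α, hα, hX⟩
      obtain ⟨m, hm, hle⟩ := exists_minimalModel_le φ α hα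
      refine ⟨m, hm.1, ?_⟩
      rintro w (hw | hw)
      · exact hle w (hX w hw)
      · rw [Set.mem_singleton_iff.1 hw]
        exact hb m hm
  · rintro (hd | ht)
    · refine ⟨false, fun m hm => ?_⟩
      by_contra h
      have hv : m v = true := by simpa using h
      obtain ⟨β, hβ, hX⟩ := hd {w | m w = false} ⟨m, hm.1, fun w hw => hw⟩
      refine hm.2 ⟨β, hβ, ?_, ?_⟩
      · intro w hw
        by_contra hn
        have h1 := hX w (Or.inl (by simpa using hn))
        have h2 : β w = true := hw
        rw [h1] at h2
        cases h2
      · intro hs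
        have h1 := hX v (Or.inr rfl)
        have h2 : β v = true := hs hv
        rw [h1] at h2
        cases h2
    · exact ⟨true, fun m hm => ht m hm.1⟩
end

section
/- Let φ be a satisfiable set of assignments over a finite type V of propositional variables, and suppose every variable v ∈ V is settled, i.e., for each v either v is assigned false in every minimal model of φ or v is assigned true in every minimal model of φ. Then the strengthened formula obtained by additionally requiring every dispensable variable to be false, i.e., the set {α ∈ φ : α v = false for every variable v dispensable w.r.t. φ}, has exactly one element; in other words, invoking the shopping principle function completes the configuration process. -/
theorem exists_minimal_below {V : Type*} [Finite V] (φ : Set (V → Bool)) (α : V → Bool)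
    (hα : α ∈ φ) : ∃ μ, MinimalModel φ μ ∧ ∀ w, μ w = true → α w = true := by
  obtain ⟨μ, hle, hμ⟩ := (Set.toFinite φ).exists_le_minimal hα
  refine ⟨μ, ⟨hμ.prop, ?_⟩, ?_⟩
  · rintro ⟨β, hβ, hss⟩
    have hβμ : β ≤ μ := by
      intro w
      have := @hss.1 w
      simp only [Set.mem_setOf_eq] at this
      exact Bool.le_iff_imp.2 this
    have := hμ.eq_of_le hβ hβμ
    subst this
    exact hss.2 (fun _ h => h)
  · intro w hw
    exact Bool.le_iff_imp.1 (hle w) hw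

theorem shopping_principle_completes_configuration
    {V : Type*} [Finite V] (φ : Set (V → Bool)) (hsat : φ.Nonempty)
    (hsettled : ∀ v : V,
      (∀ α : V → Bool, MinimalModel φ α → α v = false) ∨
      (∀ α : V → Bool, MinimalModel φ α → α v = true)) :
    ∃! α : V → Bool, α ∈ φ ∧ ∀ v : V, Dispensable φ v → α v = false := by
  obtain ⟨α₀, hα₀⟩ := hsat
  obtain ⟨μ, hμ, -⟩ := exists_minimal_below φ α₀ hα₀
  have huniq : ∀ ν, MinimalModel φ ν → ν = μ := by
    intro ν hν
    funext v
    rcases hsettled v with h | h <;> rw [h ν hν, h μ hμ]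
  have hdisp : ∀ v, μ v = false → Dispensable φ v := by
    rintro v hv X ⟨α, hα, hX⟩
    obtain ⟨ν, hν, hle⟩ := exists_minimal_below φ α hα
    obtain rfl := huniq ν hν
    refine ⟨ν, hν.1, ?_⟩
    rintro w (hw | rfl)
    · have h1 := hX w hw
      have h2 := hle w
      grind
    · exact hv
  refine ⟨μ, ⟨hμ.1, ?_⟩, ?_⟩
  · intro v hv
    obtain ⟨β, hβ, hX⟩ := hv {w | μ w = false} ⟨μ, hμ.1, fun _ h => h⟩
    by_contra hne
    refine hμ.2 ⟨β, hβ, ?_, ?_⟩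
    · intro w hw
      by_contra hc
      have h1 := hX w (Or.inl (by simpa using hc))
      simp_all
    · intro hsub
      have h1 : β v = true := hsub (by simpa using hne)
      have h2 := hX v (Or.inr rfl)
      simp_all
  · rintro β ⟨hβ, hd⟩
    have hle : ∀ w, β w = true → μ w = true := by
      intro w hw
      by_contra hc
      have := hd w (hdisp w (by simpa using hc))
      simp_all
    apply huniq
    refine ⟨hβ, ?_⟩
    rintro ⟨γ, hγ, hss⟩
    exact hμ.2 ⟨γ, hγ, hss.trans_subset hle⟩
end
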